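/- arXiv:math/0601254 — 3 statements merged into one kernel-verified Lean document; each statement's English description precedes it below -/
import Mathlib

section
/- (Four Vectors Lemma) Let L be a commutative subspace lattice on H and Φ a rank preserving linear map on Alg L. Let N ∈ L with dim N ≥ 2 and dim N₋^⊥ ≥ 2, let x, y be linearly independent vectors in N, let f, g be linearly independent vectors in N₋^⊥, and suppose u, v, p, q, w, z, r, s are nonzero vectors in H with Φ(x⊗f*) = u⊗v*, Φ(y⊗f*) = p⊗q*, Φ(x⊗g*) = w⊗z*, and Φ(y⊗g*) = r⊗s*. Then either (1) u ∼ w, v ∼ q, p ∼ r and z ∼ s, or (2) v ∼ z, u ∼ p, w ∼ r and q ∼ s. -/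
open scoped InnerProductSpace

noncomputable section

/-- The join (closed linear span) of a family of subspaces of a Hilbert space. -/
def closedJoin {H : Type*} [NormedAddCommGroup H] [InnerProductSpace ℂ H]
    (S : Set (Submodule ℂ H)) : Submodule ℂ H :=
  (sSup S).topologicalClosure

/-- A subspace lattice on `H`: a family of closed subspaces containing `{0}` and `H`,
closed under arbitrary intersections and arbitrary closed linear spans. -/
structure IsSubspaceLattice {H : Type*} [NormedAddCommGroup H] [InnerProductSpace ℂ H]
    (L : Set (Submodule ℂ H)) : Prop where
  isClosed : ∀ E ∈ L, IsClosed (E : Set H)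
  bot_mem : ⊥ ∈ L
  top_mem : ⊤ ∈ L
  sInf_mem : ∀ S : Set (Submodule ℂ H), S ⊆ L → sInf S ∈ L
  join_mem : ∀ S : Set (Submodule ℂ H), S ⊆ L → closedJoin S ∈ L

/-- `M₋`: the join of all members of `L` that do not contain `M`. -/
def minus {H : Type*} [NormedAddCommGroup H] [InnerProductSpace ℂ H]
    (L : Set (Submodule ℂ H)) (M : Submodule ℂ H) : Submodule ℂ H :=
  closedJoin {E | E ∈ L ∧ ¬ M ≤ E}

open Classical in
/-- The orthogonal projection of `H` onto a closed subspace `E`, as an operator on `H`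
(junk value `0` if `E` is not closed). -/
def projOf {H : Type*} [NormedAddCommGroup H] [InnerProductSpace ℂ H] [CompleteSpace H]
    (E : Submodule ℂ H) : H →L[ℂ] H :=
  if h : IsClosed (E : Set H) then
    haveI : CompleteSpace E := h.completeSpace_coe
    E.subtypeL.comp (Submodule.orthogonalProjectionOnto E)
  else 0

/-- A commutative subspace lattice: the orthogonal projections onto members commute. -/
structure IsCSL {H : Type*} [NormedAddCommGroup H] [InnerProductSpace ℂ H] [CompleteSpace H]
    (L : Set (Submodule ℂ H)) extends IsSubspaceLattice L : Prop where
  commutes : ∀ E ∈ L, ∀ F ∈ L, projOf E * projOf F = projOf F * projOf E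

/-- Complete distributivity of the lattice `L` (meets are intersections, joins are
closed linear spans). -/
def IsCompletelyDistributive {H : Type*} [NormedAddCommGroup H] [InnerProductSpace ℂ H]
    (L : Set (Submodule ℂ H)) : Prop :=
  ∀ (I : Type) (J : I → Type) (E : (i : I) → J i → Submodule ℂ H),
    (∀ i j, E i j ∈ L) →
     ((⨅ i, closedJoin (Set.range (E i)))
        = closedJoin (Set.range fun φ : (∀ i, J i) => ⨅ i, E i (φ i)))
    ∧ (closedJoin (Set.range fun i => ⨅ j, E i j)
        = ⨅ φ : (∀ i, J i), closedJoin (Set.range fun i => E i (φ i)))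

/-- `Alg L`: all bounded operators leaving every member of `L` invariant. -/
def algL {H : Type*} [NormedAddCommGroup H] [InnerProductSpace ℂ H]
    (L : Set (Submodule ℂ H)) : Set (H →L[ℂ] H) :=
  {T | ∀ E ∈ L, ∀ x ∈ E, T x ∈ E}

/-- The rank one operator `x ⊗ f* : h ↦ ⟨h, f⟩ x`. -/
def rankOne {H : Type*} [NormedAddCommGroup H] [InnerProductSpace ℂ H]
    (x f : H) : H →L[ℂ] H :=
  (innerSL ℂ f).smulRight x

/-- The rank of a bounded operator: the dimension of its range. -/
def opRank {H : Type*} [NormedAddCommGroup H] [InnerProductSpace ℂ H]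
    (T : H →L[ℂ] H) : Cardinal :=
  Module.rank ℂ (LinearMap.range (T : H →ₗ[ℂ] H))

/-- `Φ` is a linear map of `Alg L` into itself. -/
structure IsLinearOnAlg {H : Type*} [NormedAddCommGroup H] [InnerProductSpace ℂ H]
    (L : Set (Submodule ℂ H)) (Φ : (H →L[ℂ] H) → (H →L[ℂ] H)) : Prop where
  maps : ∀ A ∈ algL L, Φ A ∈ algL L
  map_add : ∀ A ∈ algL L, ∀ B ∈ algL L, Φ (A + B) = Φ A + Φ B
  map_smul : ∀ (c : ℂ), ∀ A ∈ algL L, Φ (c • A) = c • Φ A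

/-- `Φ` preserves the rank of every finite rank operator in `Alg L`. -/
def RankPreserving {H : Type*} [NormedAddCommGroup H] [InnerProductSpace ℂ H]
    (L : Set (Submodule ℂ H)) (Φ : (H →L[ℂ] H) → (H →L[ℂ] H)) : Prop :=
  ∀ A ∈ algL L, opRank A < Cardinal.aleph0 → opRank (Φ A) = opRank A

/-- `a ∼ b`: (nonzero) vectors `a` and `b` are linearly dependent. -/
def Dep {H : Type*} [NormedAddCommGroup H] [InnerProductSpace ℂ H] (a b : H) : Prop :=
  ∃ c : ℂ, c ≠ 0 ∧ b = c • a

/-- `N` is consistent with respect to `Φ`. -/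
def Consistent {H : Type*} [NormedAddCommGroup H] [InnerProductSpace ℂ H]
    (L : Set (Submodule ℂ H)) (Φ : (H →L[ℂ] H) → (H →L[ℂ] H))
    (N : Submodule ℂ H) : Prop :=
  N ≠ ⊥ ∧ minus L N ≠ ⊤ ∧
    ∃ (U : N →ₗ[ℂ] H) (V : ((minus L N)ᗮ : Submodule ℂ H) →ₗ[ℂ] H),
      ∀ (x : N) (f : ((minus L N)ᗮ : Submodule ℂ H)),
        Φ (rankOne (x : H) (f : H)) = rankOne (U x) (V f)

/-- `N` is twisted with respect to `Φ`. -/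
def Twisted {H : Type*} [NormedAddCommGroup H] [InnerProductSpace ℂ H]
    (L : Set (Submodule ℂ H)) (Φ : (H →L[ℂ] H) → (H →L[ℂ] H))
    (N : Submodule ℂ H) : Prop :=
  N ≠ ⊥ ∧ minus L N ≠ ⊤ ∧
    ∃ (U : ((minus L N)ᗮ : Submodule ℂ H) →ₗ⋆[ℂ] H) (V : N →ₗ⋆[ℂ] H),
      ∀ (x : N) (f : ((minus L N)ᗮ : Submodule ℂ H)),
        Φ (rankOne (x : H) (f : H)) = rankOne (U f) (V x)

/-- `N` is isolated: `dim N = 1` and `N^⊥ ∈ L`. -/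
def Isolated {H : Type*} [NormedAddCommGroup H] [InnerProductSpace ℂ H]
    (L : Set (Submodule ℂ H)) (N : Submodule ℂ H) : Prop :=
  Module.rank ℂ N = 1 ∧ Nᗮ ∈ L

/-- The family `F` of all `N ∈ L` with `N ≠ {0}` and `N₋ ≠ H`. -/
def famF {H : Type*} [NormedAddCommGroup H] [InnerProductSpace ℂ H]
    (L : Set (Submodule ℂ H)) : Set (Submodule ℂ H) :=
  {N | N ∈ L ∧ N ≠ ⊥ ∧ minus L N ≠ ⊤}

/-- Subspaces are comparable if one contains the other. -/
def Comparable' {H : Type*} [NormedAddCommGroup H] [InnerProductSpace ℂ H]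
    (M N : Submodule ℂ H) : Prop :=
  M ≤ N ∨ N ≤ M

/-- There is a chain in `F` from `M` to `N`. -/
def ChainConn {H : Type*} [NormedAddCommGroup H] [InnerProductSpace ℂ H]
    (L : Set (Submodule ℂ H)) (M N : Submodule ℂ H) : Prop :=
  ∃ (n : ℕ) (c : Fin (n + 1) → Submodule ℂ H),
    (∀ k, c k ∈ famF L) ∧ c 0 = M ∧ c (Fin.last n) = N ∧
      ∀ k : Fin n, Comparable' (c k.castSucc) (c k.succ)

/-- `𝔊_N`: all members of `F` that can be connected to `N` by a chain. -/
def GSet {H : Type*} [NormedAddCommGroup H] [InnerProductSpace ℂ H]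
    (L : Set (Submodule ℂ H)) (N : Submodule ℂ H) : Set (Submodule ℂ H) :=
  {M | M ∈ famF L ∧ ChainConn L N M}

end


section Helpers

variable {H : Type*} [NormedAddCommGroup H] [InnerProductSpace ℂ H]

theorem fv_apply (x f h : H) : rankOne x f h = inner ℂ f h • x := by
  simp [rankOne]

theorem fv_dep_symm {a b : H} (h : Dep a b) : Dep b a := by
  obtain ⟨c, hc, rfl⟩ := h
  exact ⟨c⁻¹, inv_ne_zero hc, by rw [smul_smul, inv_mul_cancel₀ hc, one_smul]⟩

theorem fv_dep_trans {a b d : H} (h : Dep a b) (h' : Dep b d) : Dep a d := by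
  obtain ⟨c, hc, rfl⟩ := h
  obtain ⟨c', hc', rfl⟩ := h'
  exact ⟨c' * c, mul_ne_zero hc' hc, by rw [smul_smul]⟩

theorem fv_dep_refl (a : H) : Dep a a := ⟨1, one_ne_zero, by simp⟩

theorem fv_not_dep {a b : H} (h : LinearIndependent ℂ ![a, b]) : ¬ Dep a b := by
  rintro ⟨c, hc, rfl⟩
  have := (LinearIndependent.pair_iff.1 h) c (-1) (by simp)
  exact hc this.1

theorem fv_exists' {v q : H} (hv : v ≠ 0) (hq : q ≠ 0) (h : ¬ Dep v q) :
    ∃ k : H, inner ℂ v k = 0 ∧ inner ℂ q k ≠ 0 := by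
  by_contra hcon
  push Not at hcon
  have hvv : inner ℂ v v ≠ (0 : ℂ) := inner_self_ne_zero.2 hv
  set c : ℂ := inner ℂ v q / inner ℂ v v with hc
  have h1 : inner ℂ v (q - c • v) = (0 : ℂ) := by
    rw [inner_sub_right, inner_smul_right, hc, div_mul_cancel₀ _ hvv, sub_self]
  have h2 := hcon _ h1
  have h3 : q - c • v = 0 := by
    rw [← inner_self_eq_zero (𝕜 := ℂ)]
    rw [inner_sub_left, h2, inner_smul_left, h1]; simp
  have h4 : q = c • v := sub_eq_zero.1 h3
  have hc0 : c ≠ 0 := by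
    intro h0
    rw [h0, zero_smul] at h4
    exact hq h4
  exact h ⟨c, hc0, h4⟩

theorem fv_rank {u v p q : H} (hu : u ≠ 0) (hv : v ≠ 0) (hp : p ≠ 0) (hq : q ≠ 0) :
    opRank (rankOne u v + rankOne p q) ≤ 1 ↔ Dep u p ∨ Dep v q := by
  unfold opRank
  rw [rank_submodule_le_one_iff']
  constructor
  · rintro ⟨t, ht⟩
    by_contra hcon
    rw [not_or] at hcon
    obtain ⟨h1, h2⟩ := hcon
    obtain ⟨k, hk1, hk2⟩ := fv_exists' hv hq h2
    obtain ⟨l, hl1, hl2⟩ := fv_exists' hq hv (fun h => h2 (fv_dep_symm h))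
    have e1 := ht (LinearMap.mem_range_self _ k)
    have e2 := ht (LinearMap.mem_range_self _ l)
    rw [Submodule.mem_span_singleton] at e1 e2
    obtain ⟨a, ha⟩ := e1
    obtain ⟨b, hb⟩ := e2
    simp only [ContinuousLinearMap.coe_coe, ContinuousLinearMap.add_apply, fv_apply, hk1, hl1,
      zero_smul, zero_add, add_zero] at ha hb
    have ha0 : a ≠ 0 := by
      rintro rfl
      rw [zero_smul] at ha
      exact smul_ne_zero hk2 hp ha.symm
    have hb0 : b ≠ 0 := by
      rintro rfl
      rw [zero_smul] at hb
      exact smul_ne_zero hl2 hu hb.symm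
    have d1 : Dep t (inner ℂ q k • p) := ⟨a, ha0, ha.symm⟩
    have d2 : Dep t (inner ℂ v l • u) := ⟨b, hb0, hb.symm⟩
    have d3 : Dep p (inner ℂ q k • p) := ⟨_, hk2, rfl⟩
    have d4 : Dep u (inner ℂ v l • u) := ⟨_, hl2, rfl⟩
    exact h1 (fv_dep_trans d4 (fv_dep_trans (fv_dep_symm d2) (fv_dep_trans d1 (fv_dep_symm d3))))
  · rintro (⟨c, hc, rfl⟩ | ⟨c, hc, rfl⟩)
    · refine ⟨u, ?_⟩
      rintro _ ⟨h, rfl⟩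
      rw [Submodule.mem_span_singleton]
      refine ⟨inner ℂ v h + inner ℂ q h * c, ?_⟩
      simp [fv_apply, add_smul, mul_smul]
    · refine ⟨u + star c • p, ?_⟩
      rintro _ ⟨h, rfl⟩
      rw [Submodule.mem_span_singleton]
      refine ⟨inner ℂ v h, ?_⟩
      simp [fv_apply, inner_smul_left, smul_smul, mul_comm]

theorem fv_fin (u v p q : H) : opRank (rankOne u v + rankOne p q) < Cardinal.aleph0 := by
  unfold opRank
  have hle : LinearMap.range ((rankOne u v + rankOne p q : H →L[ℂ] H) : H →ₗ[ℂ] H) ≤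
      Submodule.span ℂ ({u, p} : Set H) := by
    rintro _ ⟨h, rfl⟩
    rw [Submodule.mem_span_pair]
    exact ⟨inner ℂ v h, inner ℂ q h, by simp [fv_apply]⟩
  refine (Submodule.rank_mono hle).trans_lt ?_
  have : FiniteDimensional ℂ (Submodule.span ℂ ({u, p} : Set H)) :=
    FiniteDimensional.span_of_finite ℂ (Set.toFinite _)
  exact Module.rank_lt_aleph0 _ _

theorem fv_mem {L : Set (Submodule ℂ H)} {N : Submodule ℂ H} {x f : H} (hx : x ∈ N)
    (hf : f ∈ (minus L N)ᗮ) : rankOne x f ∈ algL L := by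
  intro E hE h hh
  rw [fv_apply]
  by_cases hNE : N ≤ E
  · exact E.smul_mem _ (hNE hx)
  · have h1 : h ∈ minus L N :=
      Submodule.le_topologicalClosure _
        ((le_sSup (show E ∈ {E | E ∈ L ∧ ¬ N ≤ E} from ⟨hE, hNE⟩)) hh)
    rw [(Submodule.mem_orthogonal' _ _).1 hf h h1, zero_smul]
    exact E.zero_mem

theorem fv_key {L : Set (Submodule ℂ H)} {Φ : (H →L[ℂ] H) → (H →L[ℂ] H)}
    (hlin : IsLinearOnAlg L Φ) (hrank : RankPreserving L Φ) {N : Submodule ℂ H}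
    {x y f g u v p q : H} (hx : x ∈ N) (hy : y ∈ N)
    (hf : f ∈ (minus L N)ᗮ) (hg : g ∈ (minus L N)ᗮ)
    (hx0 : x ≠ 0) (hy0 : y ≠ 0) (hf0 : f ≠ 0) (hg0 : g ≠ 0)
    (hu : u ≠ 0) (hv : v ≠ 0) (hp : p ≠ 0) (hq : q ≠ 0)
    (hA : Φ (rankOne x f) = rankOne u v)
    (hB : Φ (rankOne y g) = rankOne p q) :
    (Dep u p ∨ Dep v q) ↔ (Dep x y ∨ Dep f g) := by
  rw [← fv_rank hu hv hp hq, ← fv_rank hx0 hf0 hy0 hg0, ← hA, ← hB,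
    ← hlin.map_add _ (fv_mem hx hf) _ (fv_mem hy hg), hrank _ _ (fv_fin _ _ _ _)]
  intro E hE h hh
  exact E.add_mem (fv_mem hx hf E hE h hh) (fv_mem hy hg E hE h hh)

end Helpers

/-- (Four Vectors Lemma) -/
theorem stmt_2 {H : Type*} [NormedAddCommGroup H] [InnerProductSpace ℂ H]
    [CompleteSpace H] [TopologicalSpace.SeparableSpace H]
    (L : Set (Submodule ℂ H)) (hL : IsCSL L)
    (Φ : (H →L[ℂ] H) → (H →L[ℂ] H)) (hlin : IsLinearOnAlg L Φ)
    (hrank : RankPreserving L Φ)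
    (N : Submodule ℂ H) (hN : N ∈ L)
    (hdimN : 2 ≤ Module.rank ℂ N)
    (hdimN' : 2 ≤ Module.rank ℂ (((minus L N)ᗮ : Submodule ℂ H) : Type _))
    (x y f g u v p q w z r s : H)
    (hx : x ∈ N) (hy : y ∈ N) (hxy : LinearIndependent ℂ ![x, y])
    (hf : f ∈ (minus L N)ᗮ) (hg : g ∈ (minus L N)ᗮ) (hfg : LinearIndependent ℂ ![f, g])
    (hu : u ≠ 0) (hv : v ≠ 0) (hp : p ≠ 0) (hq : q ≠ 0)
    (hw : w ≠ 0) (hz : z ≠ 0) (hr : r ≠ 0) (hs : s ≠ 0)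
    (hA : Φ (rankOne x f) = rankOne u v)
    (hB : Φ (rankOne y f) = rankOne p q)
    (hC : Φ (rankOne x g) = rankOne w z)
    (hD : Φ (rankOne y g) = rankOne r s) :
    (Dep u w ∧ Dep v q ∧ Dep p r ∧ Dep z s) ∨
    (Dep v z ∧ Dep u p ∧ Dep w r ∧ Dep q s) := by
  have hx0 : x ≠ 0 := hxy.ne_zero 0
  have hy0 : y ≠ 0 := hxy.ne_zero 1
  have hf0 : f ≠ 0 := hfg.ne_zero 0
  have hg0 : g ≠ 0 := hfg.ne_zero 1
  have nxy := fv_not_dep hxy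
  have nfg := fv_not_dep hfg
  have ngf : ¬ Dep g f := fun h => nfg (fv_dep_symm h)
  have hAB := (fv_key hlin hrank hx hy hf hf hx0 hy0 hf0 hf0 hu hv hp hq hA hB).2
    (Or.inr (fv_dep_refl f))
  have hCD := (fv_key hlin hrank hx hy hg hg hx0 hy0 hg0 hg0 hw hz hr hs hC hD).2
    (Or.inr (fv_dep_refl g))
  have hAC := (fv_key hlin hrank hx hx hf hg hx0 hx0 hf0 hg0 hu hv hw hz hA hC).2
    (Or.inl (fv_dep_refl x))
  have hBD := (fv_key hlin hrank hy hy hf hg hy0 hy0 hf0 hg0 hp hq hr hs hB hD).2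
    (Or.inl (fv_dep_refl y))
  have hAD := mt (fv_key hlin hrank hx hy hf hg hx0 hy0 hf0 hg0 hu hv hr hs hA hD).1
    (not_or.2 ⟨nxy, nfg⟩)
  have hCB := mt (fv_key hlin hrank hx hy hg hf hx0 hy0 hg0 hf0 hw hz hp hq hC hB).1
    (not_or.2 ⟨nxy, ngf⟩)
  rw [not_or] at hAD hCB
  obtain ⟨nur, nvs⟩ := hAD
  obtain ⟨nwp, nzq⟩ := hCB
  rcases hAB with hup | hvq
  · right
    have hvz : Dep v z := hAC.resolve_left fun h => nwp (fv_dep_trans (fv_dep_symm h) hup)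
    have hqs : Dep q s := hBD.resolve_left fun h => nur (fv_dep_trans hup h)
    have hwr : Dep w r := hCD.resolve_right fun h => nvs (fv_dep_trans hvz h)
    exact ⟨hvz, hup, hwr, hqs⟩
  · left
    have huw : Dep u w := hAC.resolve_right fun h => nzq (fv_dep_trans (fv_dep_symm h) hvq)
    have hpr : Dep p r := hBD.resolve_right fun h => nvs (fv_dep_trans hvq h)
    have hzs : Dep z s := hCD.resolve_left fun h => nur (fv_dep_trans huw h)
    exact ⟨huw, hvq, hpr, hzs⟩
end

section
/- Let L be a commutative subspace lattice on H, let Φ be a rank preserving linear map on Alg L, and let N be a nonzero element of L with N₋ ≠ H. Then at least one of the following holds: (1) there exist a linear map U : N → H and a linear map V : N₋^⊥ → H such that Φ(x⊗f*) = (Ux)⊗(Vf)* for all x ∈ N and f ∈ N₋^⊥ (N is consistent with respect to Φ); (2) there exist conjugate-linear maps U : N₋^⊥ → H and V : N → H such that Φ(x⊗f*) = (Uf)⊗(Vx)* for all x ∈ N and f ∈ N₋^⊥ (N is twisted with respect to Φ). -/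
open scoped InnerProductSpace

namespace S5

variable {H : Type*} [NormedAddCommGroup H] [InnerProductSpace ℂ H]

lemma rankOne_apply (x f h : H) : rankOne x f h = inner ℂ f h • x := by
  simp [rankOne]

lemma rankOne_add_left (x y f : H) : rankOne (x + y) f = rankOne x f + rankOne y f := by
  ext h; simp [rankOne_apply]

lemma rankOne_add_right (x f g : H) : rankOne x (f + g) = rankOne x f + rankOne x g := by
  ext h; simp [rankOne_apply, inner_add_left, add_smul]

lemma rankOne_smul_left (c : ℂ) (x f : H) : rankOne (c • x) f = c • rankOne x f := by
  ext h; simp [rankOne_apply, smul_comm c]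

lemma rankOne_smul_right (c : ℂ) (x f : H) :
    rankOne x (c • f) = (starRingEnd ℂ c) • rankOne x f := by
  ext h; simp only [rankOne_apply, inner_smul_left, mul_smul, ContinuousLinearMap.smul_apply]

lemma rankOne_zero_left (f : H) : rankOne (0 : H) f = 0 := by
  ext h; simp [rankOne_apply]

lemma rankOne_zero_right (x : H) : rankOne x (0 : H) = 0 := by
  ext h; simp [rankOne_apply]

lemma rankOne_left_inj {x y f : H} (hf : f ≠ 0) (h : rankOne x f = rankOne y f) : x = y := by
  have h1 := congrArg (fun T : H →L[ℂ] H => T f) h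
  simp only [rankOne_apply] at h1
  exact smul_right_injective H (inner_self_ne_zero.2 hf) h1

lemma rankOne_right_inj {x f g : H} (hx : x ≠ 0) (h : rankOne x f = rankOne x g) : f = g := by
  refine ext_inner_right ℂ fun k => ?_
  have h1 := congrArg (fun T : H →L[ℂ] H => T k) h
  simp only [rankOne_apply] at h1
  exact smul_left_injective ℂ hx h1

lemma rankOne_ne_zero_iff {x f : H} : rankOne x f ≠ 0 ↔ x ≠ 0 ∧ f ≠ 0 := by
  constructor
  · intro h
    constructor
    · rintro rfl; exact h (rankOne_zero_left f)
    · rintro rfl; exact h (rankOne_zero_right x)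
  · rintro ⟨hx, hf⟩ h
    exact hf (rankOne_right_inj hx (h.trans (rankOne_zero_right x).symm))

/-- If `b'` is not a multiple of `b`, some vector is orthogonal to `b` and not to `b'`. -/
lemma exists_sep {b b' : H} (h : ∀ k : ℂ, b' ≠ k • b) :
    ∃ v : H, inner ℂ b v = 0 ∧ inner ℂ b' v ≠ 0 := by
  by_cases hb : b = 0
  · subst hb
    refine ⟨b', by simp, inner_self_ne_zero.2 ?_⟩
    simpa using h 0
  have hbb : inner ℂ b b ≠ 0 := inner_self_ne_zero.2 hb
  have h1 : inner ℂ b (b' - (inner ℂ b b' / inner ℂ b b) • b) = 0 := by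
    rw [inner_sub_right, inner_smul_right, div_mul_cancel₀ _ hbb, sub_self]
  refine ⟨_, h1, fun h2 => ?_⟩
  have h3 : inner ℂ (b' - (inner ℂ b b' / inner ℂ b b) • b)
      (b' - (inner ℂ b b' / inner ℂ b b) • b) = 0 := by
    conv_lhs => rw [inner_sub_left, inner_smul_left]
    rw [h1, h2]; simp
  exact h _ (sub_eq_zero.1 (inner_self_eq_zero.1 h3))

lemma dep_symm {a b c : H} {k l : ℂ} (ha : a ≠ 0) (h1 : a = k • c) (h2 : b = l • c) :
    ∃ m : ℂ, b = m • a := by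
  have hk : k ≠ 0 := by rintro rfl; simp at h1; exact ha h1
  refine ⟨l * k⁻¹, ?_⟩
  rw [h1, h2, smul_smul, mul_assoc, inv_mul_cancel₀ hk, mul_one]

lemma add_rankOne {a b a' b' c d : H} (ha : a ≠ 0) (hb : b ≠ 0)
    (h : rankOne a b + rankOne a' b' = rankOne c d) :
    (∃ k : ℂ, a' = k • a) ∨ (∃ k : ℂ, b' = k • b) := by
  by_contra! hcon
  obtain ⟨hA, hB⟩ := hcon
  have key : ∀ v, inner ℂ b v • a + inner ℂ b' v • a' = inner ℂ d v • c := by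
    intro v
    have h1 := congrArg (fun T : H →L[ℂ] H => T v) h
    simpa [rankOne_apply] using h1
  obtain ⟨v, hv, hv'⟩ := exists_sep hB
  have hB' : ∀ k : ℂ, b ≠ k • b' := by
    intro k hk
    obtain ⟨m, hm⟩ := dep_symm hb hk (one_smul ℂ b').symm
    exact hB m hm
  obtain ⟨w, hw, hw'⟩ := exists_sep hB'
  have h1 := key v
  have h2 := key w
  rw [hv, zero_smul, zero_add] at h1
  rw [hw, zero_smul, add_zero] at h2
  have h1' : a' = ((inner ℂ b' v)⁻¹ * inner ℂ d v) • c := by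
    rw [mul_smul, ← h1, inv_smul_smul₀ hv']
  have h2' : a = ((inner ℂ b w)⁻¹ * inner ℂ d w) • c := by
    rw [mul_smul, ← h2, inv_smul_smul₀ hw']
  obtain ⟨m, hm⟩ := dep_symm ha h2' h1'
  exact hA m hm

lemma rankOne_eq_dep_right {a b c d : H} (ha : a ≠ 0) (h : rankOne a b = rankOne c d) :
    ∃ k : ℂ, b = k • d := by
  by_contra! hcon
  obtain ⟨v, hv, hv'⟩ := exists_sep hcon
  have h1 := congrArg (fun T : H →L[ℂ] H => T v) h
  simp only [rankOne_apply, hv, zero_smul] at h1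
  exact (smul_ne_zero hv' ha) h1

lemma rankOne_eq_dep_left {a b c d : H} (hb : b ≠ 0) (h : rankOne a b = rankOne c d) :
    ∃ k : ℂ, a = k • c := by
  have h1 := congrArg (fun T : H →L[ℂ] H => T b) h
  simp only [rankOne_apply] at h1
  refine ⟨(inner ℂ b b)⁻¹ * inner ℂ d b, ?_⟩
  rw [mul_smul, ← h1, inv_smul_smul₀ (inner_self_ne_zero.2 hb)]

/-- An additive family of operators of rank at most one has a common range or a common
functional. -/
lemma row_type {V : Type*} [AddCommGroup V] (D : V → (H →L[ℂ] H))
    (hadd : ∀ v w, D (v + w) = D v + D w) (h1 : ∀ v, ∃ a b, D v = rankOne a b) :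
    (∃ a, ∀ v, ∃ b, D v = rankOne a b) ∨ (∃ b, ∀ v, ∃ a, D v = rankOne a b) := by
  by_contra! hcon
  obtain ⟨hA, hB⟩ := hcon
  have hex : ∃ v, D v ≠ 0 := by
    by_contra! h0
    obtain ⟨v, hv⟩ := hA 0
    exact hv 0 (by rw [h0, rankOne_zero_left])
  have pair : ∀ {v w a b a' b'}, D v = rankOne a b → D w = rankOne a' b' → a ≠ 0 → b ≠ 0 →
      (∃ k : ℂ, a' = k • a) ∨ (∃ k : ℂ, b' = k • b) := by
    intro v w a b a' b' hv hw ha hb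
    obtain ⟨c, d, hcd⟩ := h1 (v + w)
    rw [hadd, hv, hw] at hcd
    exact add_rankOne ha hb hcd
  obtain ⟨v0, h0⟩ := hex
  obtain ⟨a0, b0, e0⟩ := h1 v0
  rw [e0, rankOne_ne_zero_iff] at h0
  obtain ⟨v1, n1⟩ := hA a0
  obtain ⟨a1, b1, e1⟩ := h1 v1
  obtain ⟨v2, n2⟩ := hB b0
  obtain ⟨a2, b2, e2⟩ := h1 v2
  have z1 : rankOne a1 b1 ≠ 0 := by
    intro h; exact n1 0 (by rw [e1, h, rankOne_zero_right])
  have z2 : rankOne a2 b2 ≠ 0 := by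
    intro h; exact n2 0 (by rw [e2, h, rankOne_zero_left])
  rw [rankOne_ne_zero_iff] at z1 z2
  have na1 : ∀ k : ℂ, a1 ≠ k • a0 := by
    rintro k rfl
    exact n1 ((starRingEnd ℂ k) • b1)
      (by rw [e1, rankOne_smul_left, rankOne_smul_right, Complex.conj_conj])
  have nb2 : ∀ k : ℂ, b2 ≠ k • b0 := by
    rintro k rfl
    exact n2 ((starRingEnd ℂ k) • a2)
      (by rw [e2, rankOne_smul_left, rankOne_smul_right])
  rcases pair e0 e1 h0.1 h0.2 with ⟨k, hk⟩ | ⟨k, hk⟩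
  · exact na1 k hk
  rcases pair e0 e2 h0.1 h0.2 with ⟨l, hl⟩ | ⟨l, hl⟩
  swap
  · exact nb2 l hl
  rcases pair e1 e2 z1.1 z1.2 with ⟨m, hm⟩ | ⟨m, hm⟩
  · obtain ⟨p, hp⟩ := dep_symm z2.1 hm (one_smul ℂ a1).symm
    exact na1 (p * l) (by rw [hp, hl, smul_smul])
  · exact nb2 (m * k) (by rw [hm, hk, smul_smul])

section Abs

variable {X Y : Type*} [AddCommGroup X] [Module ℂ X] [AddCommGroup Y] [Module ℂ Y]

lemma reconstruct (σ τ : ℂ → ℂ) (hτ : Function.Surjective τ) (B : X → Y → (H →L[ℂ] H))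
    (hadd1 : ∀ x y f, B (x + y) f = B x f + B y f)
    (hadd2 : ∀ x f g, B x (f + g) = B x f + B x g)
    (hsm1 : ∀ c x f, B (c • x) f = σ c • B x f)
    (hsm2 : ∀ c x f, B x (c • f) = τ c • B x f)
    (hnd : ∀ x f, x ≠ 0 → f ≠ 0 → B x f ≠ 0)
    (x0 : X) (hx0 : x0 ≠ 0) (f0 : Y) (hf0 : f0 ≠ 0)
    (hA : ∀ x, ∃ a, ∀ f, ∃ b, B x f = rankOne a b)
    (hB : ∀ f, ∃ b, ∀ x, ∃ a, B x f = rankOne a b) :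
    ∃ (U : X → H) (V : Y → H), (∀ x y, U (x + y) = U x + U y) ∧
      (∀ f g, V (f + g) = V f + V g) ∧ (∀ c x, U (c • x) = σ c • U x) ∧
      (∀ c f, V (c • f) = (starRingEnd ℂ (τ c)) • V f) ∧
      ∀ x f, B x f = rankOne (U x) (V f) := by
  have lin : ∀ (x : X) (a : H) (W : Y → H), a ≠ 0 → (∀ f, B x f = rankOne a (W f)) →
      (∀ f g, W (f + g) = W f + W g) ∧ (∀ c f, W (c • f) = (starRingEnd ℂ (τ c)) • W f) := by
    intro x a W ha hW
    constructor
    · intro f g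
      apply rankOne_right_inj ha
      rw [rankOne_add_right, ← hW, ← hW, ← hW, hadd2]
    · intro c f
      apply rankOne_right_inj ha
      rw [rankOne_smul_right, ← hW, ← hW, hsm2, Complex.conj_conj]
  obtain ⟨a0, h0⟩ := hA x0
  choose V hV using h0
  have ha0 : a0 ≠ 0 := by
    have := hnd x0 f0 hx0 hf0
    rw [hV, rankOne_ne_zero_iff] at this
    exact this.1
  have hVne : ∀ f, f ≠ 0 → V f ≠ 0 := by
    intro f hf
    have := hnd x0 f hx0 hf
    rw [hV, rankOne_ne_zero_iff] at this
    exact this.2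
  obtain ⟨hVa, hVs⟩ := lin x0 a0 V ha0 hV
  have hVinj : ∀ f g, V f = V g → f = g := by
    intro f g h
    by_contra hne
    have h1 := hVa (f - g) g
    rw [sub_add_cancel, h] at h1
    exact hVne _ (sub_ne_zero.2 hne) (by simpa using h1)
  have hU : ∀ x, ∃ u, ∀ f, B x f = rankOne u (V f) := by
    intro x
    obtain ⟨a, h⟩ := hA x
    choose W hW using h
    by_cases ha : a = 0
    · subst ha
      exact ⟨0, fun f => by rw [hW, rankOne_zero_left, rankOne_zero_left]⟩
    obtain ⟨hWa, hWs⟩ := lin x a W ha hW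
    have hloc : ∀ f, ∃ l : ℂ, W f = l • V f := by
      intro f
      by_cases hf : f = 0
      · subst hf
        have := hWa 0 0
        refine ⟨0, ?_⟩
        rw [add_zero] at this
        simpa using this
      obtain ⟨b, hb⟩ := hB f
      obtain ⟨a1, e1⟩ := hb x
      obtain ⟨a2, e2⟩ := hb x0
      rw [hW] at e1
      rw [hV] at e2
      obtain ⟨k, hk⟩ := rankOne_eq_dep_right ha e1
      obtain ⟨l, hl⟩ := rankOne_eq_dep_right ha0 e2
      exact dep_symm (hVne f hf) hl hk
    obtain ⟨l0, hl0⟩ := hloc f0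
    have hconst : ∀ g, W g = l0 • V g := by
      intro g
      by_cases hdep : ∃ c : ℂ, V g = c • V f0
      · obtain ⟨c, hc⟩ := hdep
        obtain ⟨c', hc'⟩ := hτ (starRingEnd ℂ c)
        have hcc : starRingEnd ℂ (τ c') = c := by rw [hc', Complex.conj_conj]
        have hg : g = c' • f0 := hVinj _ _ (by rw [hVs, hcc, hc])
        rw [hg, hWs, hVs, hl0, smul_comm]
      · push Not at hdep
        obtain ⟨l1, hl1⟩ := hloc g
        obtain ⟨l2, hl2⟩ := hloc (f0 + g)
        rw [hWa, hVa, hl0, hl1, smul_add] at hl2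
        have e : (l0 - l2) • V f0 = (l2 - l1) • V g := by
          rw [sub_smul, sub_smul, sub_eq_sub_iff_add_eq_add, hl2, add_comm]
        have e1 : l2 - l1 = 0 := by
          by_contra hne
          apply hdep ((l2 - l1)⁻¹ * (l0 - l2))
          rw [mul_smul, e, inv_smul_smul₀ hne]
        rw [e1, zero_smul] at e
        have e2 : l0 - l2 = 0 := (smul_eq_zero.1 e).resolve_right (hVne f0 hf0)
        rw [hl1]
        congr 1
        linear_combination -e1 - e2
    exact ⟨(starRingEnd ℂ l0) • a, fun f => by
      rw [hW, hconst, rankOne_smul_right, rankOne_smul_left]⟩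
  choose U hU using hU
  refine ⟨U, V, ?_, hVa, ?_, hVs, hU⟩
  · intro x y
    apply rankOne_left_inj (hVne f0 hf0)
    rw [rankOne_add_left, ← hU, ← hU, ← hU, hadd1]
  · intro c x
    apply rankOne_left_inj (hVne f0 hf0)
    rw [rankOne_smul_left, ← hU, ← hU, hsm1]

lemma dichotomy (σ τ : ℂ → ℂ) (B : X → Y → (H →L[ℂ] H))
    (hadd1 : ∀ x y f, B (x + y) f = B x f + B y f)
    (hadd2 : ∀ x f g, B x (f + g) = B x f + B x g)
    (hsm1 : ∀ c x f, B (c • x) f = σ c • B x f)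
    (hsm2 : ∀ c x f, B x (c • f) = τ c • B x f)
    (hone : ∀ x f, ∃ a b, B x f = rankOne a b)
    (hnd : ∀ x f, x ≠ 0 → f ≠ 0 → B x f ≠ 0)
    (htwo : ∀ x y f g, x ≠ 0 → f ≠ 0 → (∀ c : ℂ, y ≠ c • x) → (∀ c : ℂ, g ≠ c • f) →
      ∀ a b, B x g + B y f ≠ rankOne a b)
    (x0 : X) (hx0 : x0 ≠ 0) (f0 : Y) (hf0 : f0 ≠ 0) :
    ((∀ x, ∃ a, ∀ f, ∃ b, B x f = rankOne a b) ∧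
      (∀ f, ∃ b, ∀ x, ∃ a, B x f = rankOne a b)) ∨
    ((∀ x, ∃ b, ∀ f, ∃ a, B x f = rankOne a b) ∧
      (∀ f, ∃ a, ∀ x, ∃ b, B x f = rankOne a b)) := by
  have row := fun x => row_type (B x) (hadd2 x) (hone x)
  have col := fun f => row_type (fun x => B x f) (fun x y => hadd1 x y f) (fun x => hone x f)
  have zx : ∀ f, B 0 f = 0 := fun f => by simpa using hadd1 0 0 f
  have zf : ∀ x, B x 0 = 0 := fun x => by simpa using hadd2 x 0 0
  by_cases hX : ∃ x1 : X, x1 ≠ 0 ∧ ∀ y, ∃ c : ℂ, y = c • x1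
  · obtain ⟨x1, -, hspan⟩ := hX
    rcases row x1 with ⟨a, ha⟩ | ⟨b, hb⟩
    · choose V hV using ha
      have key : ∀ c f, B (c • x1) f = rankOne (σ c • a) (V f) := fun c f => by
        rw [hsm1, hV, rankOne_smul_left]
      left
      refine ⟨fun x => ?_, fun f => ⟨V f, fun x => ?_⟩⟩
      · obtain ⟨c, rfl⟩ := hspan x
        exact ⟨_, fun f => ⟨_, key c f⟩⟩
      · obtain ⟨c, rfl⟩ := hspan x
        exact ⟨_, key c f⟩
    · choose U hU using hb
      have key : ∀ c f, B (c • x1) f = rankOne (U f) (starRingEnd ℂ (σ c) • b) := fun c f => by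
        rw [hsm1, hU, rankOne_smul_right, Complex.conj_conj]
      right
      refine ⟨fun x => ?_, fun f => ⟨U f, fun x => ?_⟩⟩
      · obtain ⟨c, rfl⟩ := hspan x
        exact ⟨_, fun f => ⟨_, key c f⟩⟩
      · obtain ⟨c, rfl⟩ := hspan x
        exact ⟨_, key c f⟩
  by_cases hY : ∃ f1 : Y, f1 ≠ 0 ∧ ∀ g, ∃ c : ℂ, g = c • f1
  · obtain ⟨f1, -, hspan⟩ := hY
    rcases col f1 with ⟨a, ha⟩ | ⟨b, hb⟩
    · choose V hV using ha
      have key : ∀ c x, B x (c • f1) = rankOne (τ c • a) (V x) := fun c x => by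
        rw [hsm2, hV, rankOne_smul_left]
      right
      refine ⟨fun x => ⟨V x, fun f => ?_⟩, fun f => ?_⟩
      · obtain ⟨c, rfl⟩ := hspan f
        exact ⟨_, key c x⟩
      · obtain ⟨c, rfl⟩ := hspan f
        exact ⟨_, fun x => ⟨_, key c x⟩⟩
    · choose U hU using hb
      have key : ∀ c x, B x (c • f1) = rankOne (U x) (starRingEnd ℂ (τ c) • b) := fun c x => by
        rw [hsm2, hU, rankOne_smul_right, Complex.conj_conj]
      left
      refine ⟨fun x => ⟨U x, fun f => ?_⟩, fun f => ?_⟩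
      · obtain ⟨c, rfl⟩ := hspan f
        exact ⟨_, key c x⟩
      · obtain ⟨c, rfl⟩ := hspan f
        exact ⟨_, fun x => ⟨_, key c x⟩⟩
  push Not at hX hY
  -- row and column types exclude each other
  have exA : ∀ x f, x ≠ 0 → f ≠ 0 → (∃ a, ∀ f, ∃ b, B x f = rankOne a b) →
      (∃ a, ∀ x, ∃ b, B x f = rankOne a b) → False := by
    rintro x f hx hf ⟨a, ha⟩ ⟨a', ha'⟩
    obtain ⟨y, hy⟩ := hX x hx
    obtain ⟨g, hg⟩ := hY f hf
    obtain ⟨b1, e1⟩ := ha f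
    obtain ⟨b2, e2⟩ := ha' x
    obtain ⟨b3, e3⟩ := ha g
    obtain ⟨b4, e4⟩ := ha' y
    have n := hnd x f hx hf
    rw [e2, rankOne_ne_zero_iff] at n
    obtain ⟨k, hk⟩ := rankOne_eq_dep_left n.2 (e2.symm.trans e1)
    refine htwo x y f g hx hf hy hg a (b3 + starRingEnd ℂ k • b4) ?_
    rw [e3, e4, hk, rankOne_smul_left, rankOne_add_right, rankOne_smul_right, Complex.conj_conj]
  have exB : ∀ x f, x ≠ 0 → f ≠ 0 → (∃ b, ∀ f, ∃ a, B x f = rankOne a b) →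
      (∃ b, ∀ x, ∃ a, B x f = rankOne a b) → False := by
    rintro x f hx hf ⟨b, hb⟩ ⟨b', hb'⟩
    obtain ⟨y, hy⟩ := hX x hx
    obtain ⟨g, hg⟩ := hY f hf
    obtain ⟨a1, e1⟩ := hb f
    obtain ⟨a2, e2⟩ := hb' x
    obtain ⟨a3, e3⟩ := hb g
    obtain ⟨a4, e4⟩ := hb' y
    have n := hnd x f hx hf
    rw [e2, rankOne_ne_zero_iff] at n
    obtain ⟨k, hk⟩ := rankOne_eq_dep_right n.1 (e2.symm.trans e1)
    refine htwo x y f g hx hf hy hg (a3 + starRingEnd ℂ k • a4) b ?_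
    rw [e3, e4, hk, rankOne_smul_right, rankOne_add_left, rankOne_smul_left]
  rcases row x0 with h0 | h0
  · left
    have hc : ∀ f, f ≠ 0 → ∃ b, ∀ x, ∃ a, B x f = rankOne a b := fun f hf =>
      (col f).resolve_left fun h => exA x0 f hx0 hf h0 h
    refine ⟨fun x => ?_, fun f => ?_⟩
    · by_cases hx : x = 0
      · subst hx; exact ⟨0, fun f => ⟨0, by rw [zx, rankOne_zero_left]⟩⟩
      · exact (row x).resolve_right fun h => exB x f0 hx hf0 h (hc f0 hf0)
    · by_cases hf : f = 0
      · subst hf; exact ⟨0, fun f => ⟨0, by rw [zf, rankOne_zero_left]⟩⟩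
      · exact hc f hf
  · right
    have hc : ∀ f, f ≠ 0 → ∃ a, ∀ x, ∃ b, B x f = rankOne a b := fun f hf =>
      (col f).resolve_right fun h => exB x0 f hx0 hf h0 h
    refine ⟨fun x => ?_, fun f => ?_⟩
    · by_cases hx : x = 0
      · subst hx; exact ⟨0, fun f => ⟨0, by rw [zx, rankOne_zero_left]⟩⟩
      · exact (row x).resolve_left fun h => exA x f0 hx hf0 h (hc f0 hf0)
    · by_cases hf : f = 0
      · subst hf; exact ⟨0, fun f => ⟨0, by rw [zf, rankOne_zero_left]⟩⟩
      · exact hc f hf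

/-- Mirror image of `reconstruct`. -/
lemma reconstruct' (σ τ : ℂ → ℂ) (hσ : Function.Surjective σ) (B : X → Y → (H →L[ℂ] H))
    (hadd1 : ∀ x y f, B (x + y) f = B x f + B y f)
    (hadd2 : ∀ x f g, B x (f + g) = B x f + B x g)
    (hsm1 : ∀ c x f, B (c • x) f = σ c • B x f)
    (hsm2 : ∀ c x f, B x (c • f) = τ c • B x f)
    (hnd : ∀ x f, x ≠ 0 → f ≠ 0 → B x f ≠ 0)
    (x0 : X) (hx0 : x0 ≠ 0) (f0 : Y) (hf0 : f0 ≠ 0)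
    (hA : ∀ x, ∃ b, ∀ f, ∃ a, B x f = rankOne a b)
    (hB : ∀ f, ∃ a, ∀ x, ∃ b, B x f = rankOne a b) :
    ∃ (U : Y → H) (V : X → H), (∀ x y, U (x + y) = U x + U y) ∧
      (∀ f g, V (f + g) = V f + V g) ∧ (∀ c x, U (c • x) = τ c • U x) ∧
      (∀ c f, V (c • f) = (starRingEnd ℂ (σ c)) • V f) ∧
      ∀ f x, B x f = rankOne (U f) (V x) :=
  reconstruct τ σ hσ (fun f x => B x f) (fun _ _ _ => hadd2 _ _ _) (fun _ _ _ => hadd1 _ _ _)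
    (fun _ _ _ => hsm2 _ _ _) (fun _ _ _ => hsm1 _ _ _) (fun f x hf hx => hnd x f hx hf)
    f0 hf0 x0 hx0 hB hA

end Abs

lemma opRank_rankOne_le (a b : H) : opRank (rankOne a b) ≤ 1 := by
  unfold opRank
  rw [rank_submodule_le_one_iff']
  refine ⟨a, ?_⟩
  rintro _ ⟨v, rfl⟩
  exact Submodule.mem_span_singleton.2 ⟨inner ℂ b v, (rankOne_apply a b v).symm⟩

lemma opRank_le_one [CompleteSpace H] {A : H →L[ℂ] H} (h : opRank A ≤ 1) :
    ∃ a b, A = rankOne a b := by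
  unfold opRank at h
  rw [rank_submodule_le_one_iff] at h
  obtain ⟨a, -, ha⟩ := h
  by_cases ha0 : a = 0
  · refine ⟨0, 0, ?_⟩
    ext v
    have := ha ⟨v, rfl⟩
    simpa [ha0, rankOne_apply] using this
  refine ⟨a, ((inner ℂ a a)⁻¹ : ℂ) • (ContinuousLinearMap.adjoint A a), ?_⟩
  ext v
  obtain ⟨c, hc⟩ := Submodule.mem_span_singleton.1 (ha ⟨v, rfl⟩)
  have hc' : A v = c • a := hc.symm
  have haa : inner ℂ a a ≠ 0 := inner_self_ne_zero.2 ha0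
  rw [rankOne_apply, inner_smul_left, ContinuousLinearMap.adjoint_inner_left, hc',
    inner_smul_right, map_inv₀, inner_conj_symm]
  congr 1
  field_simp

lemma opRank_eq_zero {A : H →L[ℂ] H} (h : opRank A = 0) : A = 0 := by
  unfold opRank at h
  rw [Submodule.rank_eq_zero, LinearMap.range_eq_bot] at h
  ext v
  exact congrArg (fun T : H →ₗ[ℂ] H => T v) h

lemma opRank_zero : opRank (0 : H →L[ℂ] H) = 0 := by
  simp [opRank]

lemma opRank_add_le (A B : H →L[ℂ] H) : opRank (A + B) ≤ opRank A + opRank B :=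
  LinearMap.rank_add_le (A : H →ₗ[ℂ] H) (B : H →ₗ[ℂ] H)

lemma rankOne_mem (L : Set (Submodule ℂ H)) (N : Submodule ℂ H) {x f : H} (hx : x ∈ N)
    (hf : f ∈ (minus L N)ᗮ) : rankOne x f ∈ algL L := by
  intro E hE v hv
  rw [rankOne_apply]
  by_cases h : N ≤ E
  · exact E.smul_mem _ (h hx)
  · have hv' : v ∈ minus L N :=
      Submodule.le_topologicalClosure _ 
        ((le_sSup (show E ∈ {E | E ∈ L ∧ ¬ N ≤ E} from ⟨hE, h⟩) : E ≤ _) hv)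
    rw [Submodule.inner_left_of_mem_orthogonal hv' hf, zero_smul]
    exact E.zero_mem

end S5

theorem stmt_5 {H : Type*} [NormedAddCommGroup H] [InnerProductSpace ℂ H]
    [CompleteSpace H] [TopologicalSpace.SeparableSpace H]
    (L : Set (Submodule ℂ H)) (hL : IsCSL L)
    (Φ : (H →L[ℂ] H) → (H →L[ℂ] H)) (hlin : IsLinearOnAlg L Φ)
    (hrank : RankPreserving L Φ)
    (N : Submodule ℂ H) (hN : N ∈ L) (hN0 : N ≠ ⊥) (hNm : minus L N ≠ ⊤) :
    Consistent L Φ N ∨ Twisted L Φ N := by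
  have hmem : ∀ (x : N) (f : ((minus L N)ᗮ : Submodule ℂ H)),
      rankOne (x : H) (f : H) ∈ algL L := fun x f => S5.rankOne_mem L N x.2 f.2
  have hsum : ∀ A ∈ algL L, ∀ B ∈ algL L, A + B ∈ algL L := fun A hA B hB E hE v hv =>
    E.add_mem (hA E hE v hv) (hB E hE v hv)
  have one_lt : (1 : Cardinal) < Cardinal.aleph0 := Cardinal.one_lt_aleph0
  have hr1 : ∀ (x : N) (f : ((minus L N)ᗮ : Submodule ℂ H)),
      opRank (Φ (rankOne (x : H) (f : H))) = opRank (rankOne (x : H) (f : H)) := fun x f =>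
    hrank _ (hmem x f) ((S5.opRank_rankOne_le _ _).trans_lt one_lt)
  obtain ⟨x0, hx0N, hx0⟩ := Submodule.exists_mem_ne_zero_of_ne_bot hN0
  have hperp : (minus L N)ᗮ ≠ ⊥ := by
    have hc : IsClosed ((minus L N : Submodule ℂ H) : Set H) :=
      Submodule.isClosed_topologicalClosure _
    haveI : CompleteSpace (minus L N) := hc.completeSpace_coe
    intro h
    exact hNm ((Submodule.orthogonal_eq_bot_iff).1 h)
  obtain ⟨f0, hf0N, hf0⟩ := Submodule.exists_mem_ne_zero_of_ne_bot hperp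
  set B : N → ((minus L N)ᗮ : Submodule ℂ H) → (H →L[ℂ] H) :=
    fun x f => Φ (rankOne (x : H) (f : H)) with hBdef
  have hadd1 : ∀ x y f, B (x + y) f = B x f + B y f := fun x y f => by
    simp only [hBdef, Submodule.coe_add, S5.rankOne_add_left]
    exact hlin.map_add _ (hmem x f) _ (hmem y f)
  have hadd2 : ∀ x f g, B x (f + g) = B x f + B x g := fun x f g => by
    simp only [hBdef, Submodule.coe_add, S5.rankOne_add_right]
    exact hlin.map_add _ (hmem x f) _ (hmem x g)
  have hsm1 : ∀ (c : ℂ) x f, B (c • x) f = id c • B x f := fun c x f => by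
    simp only [hBdef, Submodule.coe_smul, S5.rankOne_smul_left]
    exact hlin.map_smul _ _ (hmem x f)
  have hsm2 : ∀ (c : ℂ) x f, B x (c • f) = (starRingEnd ℂ c) • B x f := fun c x f => by
    simp only [hBdef, Submodule.coe_smul, S5.rankOne_smul_right]
    exact hlin.map_smul _ _ (hmem x f)
  have hone : ∀ x f, ∃ a b, B x f = rankOne a b := fun x f =>
    S5.opRank_le_one ((hr1 x f).trans_le (S5.opRank_rankOne_le _ _))
  have hnd : ∀ x f, x ≠ 0 → f ≠ 0 → B x f ≠ 0 := by
    intro x f hx hf h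
    have h1 := hr1 x f
    rw [show Φ (rankOne (x : H) (f : H)) = 0 from h, S5.opRank_zero] at h1
    refine S5.rankOne_ne_zero_iff.2 ⟨?_, ?_⟩ (S5.opRank_eq_zero h1.symm)
    · simpa using hx
    · simpa using hf
  have htwo : ∀ x y f g, x ≠ 0 → f ≠ 0 → (∀ c : ℂ, y ≠ c • x) → (∀ c : ℂ, g ≠ c • f) →
      ∀ a b, B x g + B y f ≠ rankOne a b := by
    intro x y f g hx hf hy hg a b h
    have hle := S5.opRank_add_le (rankOne (x : H) (g : H)) (rankOne (y : H) (f : H))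
    have hfin : opRank (rankOne (x : H) (g : H) + rankOne (y : H) (f : H)) < Cardinal.aleph0 :=
      hle.trans_lt (Cardinal.add_lt_aleph0 ((S5.opRank_rankOne_le _ _).trans_lt one_lt)
        ((S5.opRank_rankOne_le _ _).trans_lt one_lt))
    have e := hrank _ (hsum _ (hmem x g) _ (hmem y f)) hfin
    rw [hlin.map_add _ (hmem x g) _ (hmem y f)] at e
    have h' : Φ (rankOne (x : H) (g : H)) + Φ (rankOne (y : H) (f : H)) = rankOne a b := h
    rw [h'] at e
    obtain ⟨c, d, hcd⟩ := S5.opRank_le_one (e.symm.trans_le (S5.opRank_rankOne_le a b))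
    have hg0 : (g : H) ≠ 0 := by
      intro h0
      exact hg 0 (by rw [zero_smul]; exact Subtype.ext h0)
    rcases S5.add_rankOne (by simpa using hx) hg0 hcd with ⟨k, hk⟩ | ⟨k, hk⟩
    · exact hy k (Subtype.ext hk)
    · obtain ⟨m, hm⟩ := S5.dep_symm (a := (f : H)) (by simpa using hf) hk
        (one_smul ℂ (g : H)).symm
      exact hg m (Subtype.ext hm)
  have hx0' : (⟨x0, hx0N⟩ : N) ≠ 0 := fun h => hx0 (congrArg Subtype.val h)
  have hf0' : (⟨f0, hf0N⟩ : ((minus L N)ᗮ : Submodule ℂ H)) ≠ 0 :=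
    fun h => hf0 (congrArg Subtype.val h)
  rcases S5.dichotomy id (starRingEnd ℂ) B hadd1 hadd2 hsm1 hsm2 hone hnd htwo _ hx0' _ hf0'
    with ⟨hA, hB⟩ | ⟨hA, hB⟩
  · left
    obtain ⟨U, V, hUa, hVa, hUs, hVs, hUV⟩ := S5.reconstruct id (starRingEnd ℂ)
      (fun c => ⟨starRingEnd ℂ c, Complex.conj_conj c⟩) B hadd1 hadd2 hsm1 hsm2 hnd
      _ hx0' _ hf0' hA hB
    exact ⟨hN0, hNm, { toFun := U, map_add' := hUa, map_smul' := hUs },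
      { toFun := V, map_add' := hVa, map_smul' := fun c f => by
          rw [hVs, Complex.conj_conj]; rfl }, hUV⟩
  · right
    obtain ⟨U, V, hUa, hVa, hUs, hVs, hUV⟩ := S5.reconstruct' id (starRingEnd ℂ)
      (fun c => ⟨c, rfl⟩) B hadd1 hadd2 hsm1 hsm2 hnd _ hx0' _ hf0' hA hB
    exact ⟨hN0, hNm, { toFun := U, map_add' := hUa, map_smul' := hUs },
      { toFun := V, map_add' := hVa, map_smul' := hVs }, fun x f => hUV f x⟩
end

section
/- Let L be a commutative subspace lattice on H, let Φ be a rank preserving linear map on Alg L, and let M, N ∈ L with {0} ≠ N ⊆ M and M₋ ≠ H. Then: (1) if M is consistent with respect to Φ, then N is consistent with respect to Φ; (2) if M is twisted with respect to Φ, then N is twisted with respect to Φ. -/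
open scoped InnerProductSpace

section Helpers

open scoped ComplexConjugate

variable {H : Type*} [NormedAddCommGroup H] [InnerProductSpace ℂ H]

/-- Operators of the form `a ⊗ b*`, i.e. of rank at most one. -/
def IsR1 (T : H →L[ℂ] H) : Prop := ∃ a b, T = rankOne a b

theorem rankOne_apply' (a b h : H) : rankOne a b h = ⟪b, h⟫_ℂ • a := by
  simp [rankOne]

theorem exists_sep (f g : H) (h : ∀ c : ℂ, f ≠ c • g) :
    ∃ k : H, ⟪g, k⟫_ℂ = 0 ∧ ⟪f, k⟫_ℂ ≠ 0 := by
  set c : ℂ := ⟪g, f⟫_ℂ / ⟪g, g⟫_ℂ with hc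
  have h1 : ⟪g, f - c • g⟫_ℂ = 0 := by
    rw [inner_sub_right, inner_smul_right, hc]
    by_cases hg : g = 0
    · simp [hg]
    · have : ⟪g, g⟫_ℂ ≠ 0 := inner_self_ne_zero.2 hg
      field_simp
      simp
  refine ⟨f - c • g, h1, ?_⟩
  intro h2
  have h3 : ⟪f - c • g, f - c • g⟫_ℂ = 0 := by
    rw [inner_sub_left, inner_smul_left, h1, h2]; simp
  exact h c (sub_eq_zero.1 (inner_self_eq_zero.1 h3))

theorem not_isR1 (a b u g : H) (hu : u ≠ 0) (hg : g ≠ 0) (ha : ∀ c : ℂ, a ≠ c • u)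
    (hb : ∀ c : ℂ, b ≠ c • g) : ¬ IsR1 (rankOne a b + rankOne u g) := by
  rintro ⟨p, q, h⟩
  obtain ⟨k, hk1, hk2⟩ := exists_sep b g hb
  obtain ⟨l, hl1, hl2⟩ := exists_sep g b (by
    intro c hc
    have hc0 : c ≠ 0 := by rintro rfl; exact hg (by simpa using hc)
    exact hb c⁻¹ (by rw [hc, smul_smul, inv_mul_cancel₀ hc0, one_smul]))
  have e1 := DFunLike.congr_fun h k
  have e2 := DFunLike.congr_fun h l
  simp only [add_apply, rankOne_apply', hk1, hl1, zero_smul, add_zero,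
    zero_add] at e1 e2
  have hs : ⟪q, l⟫_ℂ ≠ 0 := by
    intro h0
    rw [h0, zero_smul] at e2
    rcases smul_eq_zero.1 e2 with h | h
    · exact hl2 h
    · exact hu h
  have hp : p = (⟪q, l⟫_ℂ)⁻¹ • ⟪g, l⟫_ℂ • u := by
    rw [e2, smul_smul, inv_mul_cancel₀ hs, one_smul]
  apply ha ((⟪b, k⟫_ℂ)⁻¹ * (⟪q, k⟫_ℂ * ((⟪q, l⟫_ℂ)⁻¹ * ⟪g, l⟫_ℂ)))
  rw [mul_smul, mul_smul, mul_smul, ← hp, ← e1, smul_smul, inv_mul_cancel₀ hk2, one_smul]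

theorem key {σ : ℂ →+* ℂ} [CompleteSpace H] (hσ : ∀ c, conj (σ (conj c)) = σ c)
    (hσs : Function.Surjective σ)
    (M N F : Submodule ℂ H) (hNM : N ≤ M) (hN0 : N ≠ ⊥)
    (U : M →ₛₗ[σ] H) (f0 g0 : H) (hf0F : f0 ∈ F) (hg0 : g0 ≠ 0)
    (D : H → H → (H →L[ℂ] H))
    (add1 : ∀ x ∈ N, ∀ y ∈ N, ∀ f ∈ F, D (x + y) f = D x f + D y f)
    (smul1 : ∀ (c : ℂ), ∀ x ∈ N, ∀ f ∈ F, D (c • x) f = σ c • D x f)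
    (add2 : ∀ x ∈ N, ∀ f ∈ F, ∀ g ∈ F, D x (f + g) = D x f + D x g)
    (smul2 : ∀ (c : ℂ), ∀ x ∈ N, ∀ f ∈ F, D x (c • f) = σ (conj c) • D x f)
    (h0 : ∀ x : M, D x f0 = rankOne (U x) g0)
    (hU : ∀ x, U x = 0 → x = 0)
    (hr1 : ∀ x ∈ N, ∀ f ∈ F, IsR1 (D x f))
    (hr2 : ∀ x ∈ N, ∀ f ∈ F, ∀ x1 ∈ M, x ≠ 0 → (∀ c : ℂ, x1 ≠ c • x) → (∀ c : ℂ, f ≠ c • f0) →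
      ¬ IsR1 (D x1 f0 + D x f))
    (hdim : ∀ x ∈ N, ∃ x1 ∈ M, ∀ c : ℂ, x1 ≠ c • x) :
    ∃ V : F →ₛₗ[σ] H, ∀ (x : N) (f : F), D x f = rankOne (U ⟨x, hNM x.2⟩) (V f) := by
  have claim : ∀ x (hx : x ∈ N), x ≠ 0 → ∀ f ∈ F, ∃ b, D x f = rankOne (U ⟨x, hNM hx⟩) b := by
    intro x hx hx0 f hf
    by_cases hff : ∃ c : ℂ, f = c • f0
    · obtain ⟨c, rfl⟩ := hff
      refine ⟨σ c • g0, ?_⟩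
      rw [smul2 c x hx f0 hf0F, h0 ⟨x, hNM hx⟩]
      ext h
      have : conj (σ c) = σ (conj c) := by rw [← hσ (conj c)]; simp
      simp [rankOne_apply', inner_smul_left, this, smul_smul, mul_comm]
    · push Not at hff
      obtain ⟨a, b, hab⟩ := hr1 x hx f hf
      have hux : U ⟨x, hNM hx⟩ ≠ 0 := fun h => hx0 (by simpa using congrArg Subtype.val (hU _ h))
      have hsum : IsR1 (rankOne a b + rankOne (U ⟨x, hNM hx⟩) g0) := by
        rw [← hab, ← h0 ⟨x, hNM hx⟩, ← add2 x hx f hf f0 hf0F]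
        exact hr1 x hx _ (F.add_mem hf hf0F)
      by_cases ha : ∃ c : ℂ, a = c • U ⟨x, hNM hx⟩
      · obtain ⟨c, hc⟩ := ha
        refine ⟨conj c • b, ?_⟩
        rw [hab, hc]
        ext h
        simp [rankOne_apply', inner_smul_left, smul_smul, mul_comm]
      · push Not at ha
        by_cases hb : ∃ c : ℂ, b = c • g0
        · exfalso
          obtain ⟨c, rfl⟩ := hb
          obtain ⟨x1, hx1, hx1c⟩ := hdim x hx
          refine hr2 x hx f hf x1 hx1 hx0 hx1c hff ⟨U ⟨x1, hx1⟩ + conj c • a, g0, ?_⟩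
          rw [h0 ⟨x1, hx1⟩, hab]
          ext h
          simp [rankOne_apply', inner_smul_left, smul_smul, mul_comm]
        · push Not at hb
          exact absurd hsum (not_isR1 _ _ _ _ hux hg0 ha hb)
  obtain ⟨x0, hx0, hx00⟩ := N.exists_mem_ne_zero_of_ne_bot hN0
  set u0 := U ⟨x0, hNM hx0⟩ with hu0
  have hu00 : u0 ≠ 0 := fun h => hx00 (by simpa using congrArg Subtype.val (hU _ h))
  have hii : ⟪u0, u0⟫_ℂ ≠ 0 := inner_self_ne_zero.2 hu00
  have huniq : ∀ b b', rankOne u0 b = rankOne u0 b' → b = b' := by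
    intro b b' h
    refine ext_inner_right ℂ fun v => ?_
    have := DFunLike.congr_fun h v
    simp only [rankOne_apply'] at this
    exact smul_left_injective ℂ hu00 this
  have hW' : ∀ f : F, ∃ b, D x0 f = rankOne u0 b := fun f => claim x0 hx0 hx00 f f.2
  choose W hW using hW'
  let V : F →ₛₗ[σ] H :=
    { toFun := W
      map_add' := by
        intro f g
        apply huniq
        rw [← hW, Submodule.coe_add, add2 _ hx0 _ f.2 _ g.2, hW, hW]
        ext h
        simp [rankOne_apply', inner_add_left, add_smul]
      map_smul' := by
        intro c f
        apply huniq
        rw [← hW, Submodule.coe_smul, smul2 _ _ hx0 _ f.2, hW]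
        have : conj (σ c) = σ (conj c) := by rw [← hσ (conj c)]; simp
        ext h
        simp [rankOne_apply', inner_smul_left, smul_smul, this, mul_comm] }
  refine ⟨V, ?_⟩
  rintro ⟨x, hx⟩ f
  change D x f = rankOne (U ⟨x, hNM hx⟩) (W f)
  by_cases hxx : ∃ c : ℂ, x = c • x0
  · obtain ⟨c, rfl⟩ := hxx
    have : U ⟨c • x0, hNM hx⟩ = σ c • u0 := by
      rw [hu0, ← LinearMap.map_smulₛₗ]; rfl
    rw [this, smul1 c _ hx0 _ f.2, hW]
    ext h
    simp [rankOne_apply', smul_smul, mul_comm]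
  · push Not at hxx
    have hxne : x ≠ 0 := fun h => hxx 0 (by simp [h])
    have hsne : x + x0 ≠ 0 := fun h => hxx (-1) (by rw [neg_one_smul]; exact eq_neg_of_add_eq_zero_left h)
    obtain ⟨b, hb⟩ := claim x hx hxne f f.2
    obtain ⟨d, hd⟩ := claim _ (N.add_mem hx hx0) hsne f f.2
    have hUadd : U ⟨x + x0, hNM (N.add_mem hx hx0)⟩ = U ⟨x, hNM hx⟩ + u0 := by
      rw [hu0, ← map_add]; rfl
    rw [add1 x hx x0 hx0 f f.2, hb, hW, hUadd] at hd
    have hbW : b = W f := by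
      refine ext_inner_right ℂ fun v => ?_
      have e := DFunLike.congr_fun hd v
      simp only [add_apply, rankOne_apply', smul_add] at e
      have e' : (⟪b, v⟫_ℂ - ⟪d, v⟫_ℂ) • U ⟨x, hNM hx⟩ = (⟪d, v⟫_ℂ - ⟪W f, v⟫_ℂ) • u0 := by
        rw [sub_smul, sub_smul, sub_eq_sub_iff_add_eq_add, e, add_comm]
      by_cases hβ : ⟪b, v⟫_ℂ - ⟪d, v⟫_ℂ = 0
      · rw [hβ, zero_smul] at e'
        rcases smul_eq_zero.1 e'.symm with h | h
        · rw [sub_eq_zero.1 hβ, sub_eq_zero.1 h]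
        · exact absurd h hu00
      · exfalso
        obtain ⟨c, hc⟩ := hσs ((⟪b, v⟫_ℂ - ⟪d, v⟫_ℂ)⁻¹ * (⟪d, v⟫_ℂ - ⟪W f, v⟫_ℂ))
        have h1 : U ⟨x, hNM hx⟩ = σ c • u0 := by
          rw [hc, mul_smul, ← e', smul_smul, inv_mul_cancel₀ hβ, one_smul]
        have h2 := hU (⟨x, hNM hx⟩ - c • ⟨x0, hNM hx0⟩) (by
          rw [map_sub, LinearMap.map_smulₛₗ, h1, sub_self])
        exact hxx c (sub_eq_zero.1 (by simpa using congrArg Subtype.val h2))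
    rw [hb, hbW]


theorem isR1_iff [CompleteSpace H] (T : H →L[ℂ] H) : IsR1 T ↔ opRank T ≤ 1 := by
  unfold opRank
  rw [rank_submodule_le_one_iff']
  constructor
  · rintro ⟨a, b, rfl⟩
    refine ⟨a, ?_⟩
    rintro _ ⟨h, rfl⟩
    exact Submodule.mem_span_singleton.2 ⟨⟪b, h⟫_ℂ, (rankOne_apply' a b h).symm⟩
  · rintro ⟨a, ha⟩
    by_cases ha0 : a = 0
    · refine ⟨0, 0, ?_⟩
      ext h
      have := ha ⟨h, rfl⟩
      simpa [ha0, rankOne_apply'] using this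
    · have hii : ⟪a, a⟫_ℂ ≠ 0 := inner_self_ne_zero.2 ha0
      refine ⟨a, (⟪a, a⟫_ℂ)⁻¹ • T.adjoint a, ?_⟩
      ext h
      obtain ⟨c, hc⟩ := Submodule.mem_span_singleton.1 (ha ⟨h, rfl⟩)
      have hc : c • a = T h := hc
      rw [rankOne_apply', inner_smul_left, ContinuousLinearMap.adjoint_inner_left, ← hc,
        inner_smul_right, map_inv₀, inner_conj_symm]
      congr 1
      field_simp

theorem opRank_eq_zero {T : H →L[ℂ] H} (h : opRank T = 0) : T = 0 := by
  unfold opRank at h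
  rw [Submodule.rank_eq_zero, LinearMap.range_eq_bot] at h
  ext v
  exact DFunLike.congr_fun h v

theorem opRank_zero : opRank (0 : H →L[ℂ] H) = 0 := by
  unfold opRank
  rw [Submodule.rank_eq_zero, LinearMap.range_eq_bot]
  rfl

theorem opRank_rankOne_lt [CompleteSpace H] (x f : H) : opRank (rankOne x f) < Cardinal.aleph0 :=
  lt_of_le_of_lt ((isR1_iff _).1 ⟨x, f, rfl⟩) Cardinal.one_lt_aleph0

theorem opRank_add_lt {S T : H →L[ℂ] H} (hS : opRank S < Cardinal.aleph0)
    (hT : opRank T < Cardinal.aleph0) : opRank (S + T) < Cardinal.aleph0 :=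
  lt_of_le_of_lt (LinearMap.rank_add_le (S : H →ₗ[ℂ] H) (T : H →ₗ[ℂ] H))
    (Cardinal.add_lt_aleph0 hS hT)

theorem rankOne_add_left (x y f : H) : rankOne (x + y) f = rankOne x f + rankOne y f := by
  ext h; simp [rankOne_apply']

theorem rankOne_add_right (x f g : H) : rankOne x (f + g) = rankOne x f + rankOne x g := by
  ext h; simp [rankOne_apply', add_smul]

theorem rankOne_smul_left (c : ℂ) (x f : H) : rankOne (c • x) f = c • rankOne x f := by
  ext h; simp [rankOne_apply', smul_smul, mul_comm]

theorem rankOne_smul_right (c : ℂ) (x f : H) : rankOne x (c • f) = conj c • rankOne x f := by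
  ext h; simp [rankOne_apply', smul_smul, mul_comm]

theorem rankOne_adjoint [CompleteSpace H] (x f : H) : (rankOne x f).adjoint = rankOne f x := by
  refine ContinuousLinearMap.ext fun h => ext_inner_right ℂ fun v => ?_
  rw [ContinuousLinearMap.adjoint_inner_left, rankOne_apply', rankOne_apply', inner_smul_left,
    inner_smul_right, inner_conj_symm, mul_comm]

theorem isR1_adjoint [CompleteSpace H] {T : H →L[ℂ] H} (h : IsR1 T) : IsR1 T.adjoint := by
  obtain ⟨a, b, rfl⟩ := h
  exact ⟨b, a, rankOne_adjoint a b⟩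

theorem rankOne_eq_zero {x f : H} (hf : f ≠ 0) (h : rankOne x f = 0) : x = 0 := by
  have := DFunLike.congr_fun h f
  rw [rankOne_apply'] at this
  rcases smul_eq_zero.1 this with h | h
  · exact absurd (inner_self_eq_zero.1 h) hf
  · exact h

theorem rankOne_mem (L : Set (Submodule ℂ H)) (N : Submodule ℂ H) {x f : H} (hx : x ∈ N)
    (hf : f ∈ (minus L N)ᗮ) : rankOne x f ∈ algL L := by
  intro E hE h hh
  rw [rankOne_apply']
  by_cases hNE : N ≤ E
  · exact E.smul_mem _ (hNE hx)
  · have : h ∈ minus L N :=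
      Submodule.le_topologicalClosure _ ((le_sSup (show E ∈ {E | E ∈ L ∧ ¬ N ≤ E} from ⟨hE, hNE⟩)) hh)
    rw [Submodule.inner_left_of_mem_orthogonal this hf, zero_smul]
    exact E.zero_mem

theorem minus_mono (L : Set (Submodule ℂ H)) {N M : Submodule ℂ H} (h : N ≤ M) :
    minus L N ≤ minus L M :=
  Submodule.topologicalClosure_mono
    (sSup_le_sSup fun _ hE => ⟨hE.1, fun h' => hE.2 (h.trans h')⟩)

theorem algL_add {L : Set (Submodule ℂ H)} {S T : H →L[ℂ] H} (hS : S ∈ algL L)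
    (hT : T ∈ algL L) : S + T ∈ algL L :=
  fun E hE x hx => E.add_mem (hS E hE x hx) (hT E hE x hx)

end Helpers

theorem stmt_7 {H : Type*} [NormedAddCommGroup H] [InnerProductSpace ℂ H]
    [CompleteSpace H] [TopologicalSpace.SeparableSpace H]
    (L : Set (Submodule ℂ H)) (hL : IsCSL L)
    (Φ : (H →L[ℂ] H) → (H →L[ℂ] H)) (hlin : IsLinearOnAlg L Φ)
    (hrank : RankPreserving L Φ)
    (M N : Submodule ℂ H) (hM : M ∈ L) (hN : N ∈ L)
    (hN0 : N ≠ ⊥) (hNM : N ≤ M) (hMm : minus L M ≠ ⊤) :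
    (Consistent L Φ M → Consistent L Φ N) ∧ (Twisted L Φ M → Twisted L Φ N) := by
  have hmono := minus_mono L hNM
  have hNm : minus L N ≠ ⊤ := fun h => hMm (top_le_iff.1 (h ▸ hmono))
  have horth : (minus L M)ᗮ ≤ (minus L N)ᗮ := Submodule.orthogonal_le hmono
  have hMo : (minus L M)ᗮ ≠ ⊥ := by
    intro h
    apply hMm
    unfold minus closedJoin at h ⊢
    rw [Submodule.orthogonal_closure] at h
    exact Submodule.topologicalClosure_eq_top_iff.2 h
  obtain ⟨f0, hf0, hf00⟩ := Submodule.exists_mem_ne_zero_of_ne_bot hMo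
  have hf0N := horth hf0
  obtain ⟨x0, hx0, hx00⟩ := Submodule.exists_mem_ne_zero_of_ne_bot hN0
  have hNmem : ∀ x ∈ N, ∀ f ∈ (minus L N)ᗮ, rankOne x f ∈ algL L :=
    fun x hx f hf => rankOne_mem L N hx hf
  have add1 : ∀ x ∈ N, ∀ y ∈ N, ∀ f ∈ (minus L N)ᗮ,
      Φ (rankOne (x + y) f) = Φ (rankOne x f) + Φ (rankOne y f) := by
    intro x hx y hy f hf
    rw [rankOne_add_left, hlin.map_add _ (hNmem x hx f hf) _ (hNmem y hy f hf)]
  have smul1 : ∀ (c : ℂ), ∀ x ∈ N, ∀ f ∈ (minus L N)ᗮ,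
      Φ (rankOne (c • x) f) = c • Φ (rankOne x f) := by
    intro c x hx f hf
    rw [rankOne_smul_left, hlin.map_smul _ _ (hNmem x hx f hf)]
  have add2 : ∀ x ∈ N, ∀ f ∈ (minus L N)ᗮ, ∀ g ∈ (minus L N)ᗮ,
      Φ (rankOne x (f + g)) = Φ (rankOne x f) + Φ (rankOne x g) := by
    intro x hx f hf g hg
    rw [rankOne_add_right, hlin.map_add _ (hNmem x hx f hf) _ (hNmem x hx g hg)]
  have smul2 : ∀ (c : ℂ), ∀ x ∈ N, ∀ f ∈ (minus L N)ᗮ,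
      Φ (rankOne x (c • f)) = (starRingEnd ℂ) c • Φ (rankOne x f) := by
    intro c x hx f hf
    rw [rankOne_smul_right, hlin.map_smul _ _ (hNmem x hx f hf)]
  have hinj : ∀ x ∈ M, Φ (rankOne x f0) = 0 → x = 0 := by
    intro x hx h
    have h1 := hrank _ (rankOne_mem L M hx hf0) (opRank_rankOne_lt x f0)
    rw [h, opRank_zero] at h1
    exact rankOne_eq_zero hf00 (opRank_eq_zero h1.symm)
  have hr1 : ∀ x ∈ N, ∀ f ∈ (minus L N)ᗮ, IsR1 (Φ (rankOne x f)) := by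
    intro x hx f hf
    rw [isR1_iff, hrank _ (hNmem x hx f hf) (opRank_rankOne_lt x f), ← isR1_iff]
    exact ⟨x, f, rfl⟩
  have hr2 : ∀ x ∈ N, ∀ f ∈ (minus L N)ᗮ, ∀ x1 ∈ M, x ≠ 0 → (∀ c : ℂ, x1 ≠ c • x) →
      (∀ c : ℂ, f ≠ c • f0) → ¬ IsR1 (Φ (rankOne x1 f0) + Φ (rankOne x f)) := by
    intro x hx f hf x1 hx1 hxne hx1c hfc
    have m1 := rankOne_mem L M hx1 hf0
    have m2 := hNmem x hx f hf
    rw [← hlin.map_add _ m1 _ m2, isR1_iff, hrank _ (algL_add m1 m2)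
      (opRank_add_lt (opRank_rankOne_lt _ _) (opRank_rankOne_lt _ _)), ← isR1_iff]
    have hfne : f ≠ 0 := fun h => hfc 0 (by simp [h])
    refine not_isR1 x1 f0 x f hxne hfne hx1c ?_
    intro c hc
    have hc0 : c ≠ 0 := by rintro rfl; exact hf00 (by simpa using hc)
    exact hfc c⁻¹ (by rw [hc, smul_smul, inv_mul_cancel₀ hc0, one_smul])
  by_cases hdim : ∀ x ∈ N, ∃ x1 ∈ M, ∀ c : ℂ, x1 ≠ c • x
  · constructor
    · rintro ⟨-, -, U, V, hUV⟩
      refine ⟨hN0, hNm, ?_⟩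
      have h0 : ∀ x : M, Φ (rankOne (x : H) f0) = rankOne (U x) (V ⟨f0, hf0⟩) :=
        fun x => hUV x ⟨f0, hf0⟩
      have hg0 : V ⟨f0, hf0⟩ ≠ 0 := by
        intro h
        refine hx00 (hinj x0 (hNM hx0) ?_)
        rw [h0 ⟨x0, hNM hx0⟩, h]
        ext v; simp [rankOne_apply']
      obtain ⟨V', hV'⟩ := key (σ := RingHom.id ℂ) (by simp) Function.surjective_id M N
        ((minus L N)ᗮ) hNM hN0 U f0 _ hf0N hg0 (fun x f => Φ (rankOne x f)) add1 smul1 add2 smul2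
        h0 (fun x hx => Subtype.ext (hinj x x.2 (by rw [h0, hx]; ext v; simp [rankOne_apply'])))
        hr1 hr2 hdim
      exact ⟨U.comp (Submodule.inclusion hNM), V', hV'⟩
    · rintro ⟨-, -, U, V, hUV⟩
      refine ⟨hN0, hNm, ?_⟩
      have h0 : ∀ x : M, Φ (rankOne (x : H) f0) = rankOne (U ⟨f0, hf0⟩) (V x) :=
        fun x => hUV x ⟨f0, hf0⟩
      have hg0 : U ⟨f0, hf0⟩ ≠ 0 := by
        intro h
        refine hx00 (hinj x0 (hNM hx0) ?_)
        rw [h0 ⟨x0, hNM hx0⟩, h]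
        ext v; simp [rankOne_apply']
      obtain ⟨V', hV'⟩ := key (σ := starRingEnd ℂ) (by simp) (starRingEnd ℂ).surjective M N
        ((minus L N)ᗮ) hNM hN0 V f0 _ hf0N hg0 (fun x f => (Φ (rankOne x f)).adjoint)
        (fun x hx y hy f hf => by rw [add1 x hx y hy f hf, map_add])
        (fun c x hx f hf => by rw [smul1 c x hx f hf, LinearIsometryEquiv.map_smulₛₗ])
        (fun x hx f hf g hg => by rw [add2 x hx f hf g hg, map_add])
        (fun c x hx f hf => by rw [smul2 c x hx f hf, LinearIsometryEquiv.map_smulₛₗ])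
        (fun x => by rw [h0, rankOne_adjoint])
        (fun x hx => Subtype.ext (hinj x x.2 (by rw [h0, hx]; ext v; simp [rankOne_apply'])))
        (fun x hx f hf => isR1_adjoint (hr1 x hx f hf))
        (fun x hx f hf x1 hx1 hxne hx1c hfc h => hr2 x hx f hf x1 hx1 hxne hx1c hfc (by
          rw [← map_add] at h
          simpa using isR1_adjoint h)) hdim
      refine ⟨V', V.comp (Submodule.inclusion hNM), fun x f => ?_⟩
      have := congrArg ContinuousLinearMap.adjoint (hV' x f)
      rw [rankOne_adjoint, ContinuousLinearMap.adjoint_adjoint] at this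
      exact this
  · push Not at hdim
    obtain ⟨x, hx, hxM⟩ := hdim
    have : M = N := le_antisymm (fun y hy => by
      obtain ⟨c, rfl⟩ := hxM y hy
      exact N.smul_mem c hx) hNM
    subst this
    exact ⟨id, id⟩
end
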